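/- arXiv:2505.15972 — 4 statements merged into one kernel-verified Lean document; each statement's English description precedes it below -/
import Mathlib

section
/- Let D > 0, K̄ ∈ ℝ, and a, b, d > 0. There exist constants ρ, ρ̄ > 0, depending only on D, K̄, a, b, d, with the following property: for every ϑ ∈ ℝ and every continuously differentiable u : [0,D] → ℝ, setting w(x) = u(x) − K̄ ∫₀ˣ (x − r) u(r) dr − K̄ ϑ, one has ρ·Ψ ≤ Υ ≤ ρ̄·Ψ, where Ψ = ϑ² + ‖u‖² + ‖u'‖² + u(D)² and Υ = ϑ²/2 + (a/2)‖w‖² + (b/2)‖w'‖² + (d/2)w(D)². -/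
open Real Set

/-!
Write `w = u - K V u - K ϑ` with `V u x = ∫₀ˣ (x - r) u r dr`. By Cauchy–Schwarz, `w - u` is bounded
pointwise, and `w' - u' = -K ∫₀ˣ u` likewise, by a multiple of `ϑ² + ‖u‖²`. Hence the H¹-type
energies of `u` and `w` are each at most twice the other plus a multiple of `ϑ² + ‖u‖²`. This
settles the upper bound, and the lower bound needs only `ϑ² + ‖u‖² ≤ C (ϑ² + ‖w‖²)`. That estimate
is Grönwall's inequality for `u²`, since the bound on `w - u` at `x` involves `u` only on `[0, x]`.
-/

section Integral

open MeasureTheory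

theorem sq_integral_mul_le_integral_sq_mul_integral_sq {α : Type*} [MeasurableSpace α]
    {μ : Measure α} {f g : α → ℝ} (hf : Integrable (fun x ↦ f x ^ 2) μ)
    (hg : Integrable (fun x ↦ g x ^ 2) μ) (hfg : Integrable (fun x ↦ f x * g x) μ) :
    (∫ x, f x * g x ∂μ) ^ 2 ≤ (∫ x, f x ^ 2 ∂μ) * ∫ x, g x ^ 2 ∂μ := by
  have quadratic_nonneg (t : ℝ) : 0 ≤ (∫ x, f x ^ 2 ∂μ) * (t * t)
      + 2 * (∫ x, f x * g x ∂μ) * t + ∫ x, g x ^ 2 ∂μ := by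
    calc
      0 ≤ ∫ x, (t * f x + g x) ^ 2 ∂μ := integral_nonneg fun x ↦ sq_nonneg _
      _ = ∫ x, (t ^ 2 * f x ^ 2 + 2 * t * (f x * g x) + g x ^ 2) ∂μ := by
        congr with x
        ring
      _ = t ^ 2 * (∫ x, f x ^ 2 ∂μ) + 2 * t * (∫ x, f x * g x ∂μ) + ∫ x, g x ^ 2 ∂μ := by
        rw [integral_add ((hf.const_mul _).fun_add (hfg.const_mul _)) hg,
          integral_add (hf.const_mul _) (hfg.const_mul _), integral_const_mul, integral_const_mul]
      _ = _ := by ring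
  have discrim_nonpos := discrim_le_zero quadratic_nonneg
  rw [discrim] at discrim_nonpos
  linarith

variable {a b x : ℝ} {f g : ℝ → ℝ}

theorem sq_intervalIntegral_mul_le_of_continuousOn (hab : a ≤ b)
    (hf : ContinuousOn f (Icc a b)) (hg : ContinuousOn g (Icc a b)) :
    (∫ x in a..b, f x * g x) ^ 2 ≤ (∫ x in a..b, f x ^ 2) * ∫ x in a..b, g x ^ 2 := by
  simp only [intervalIntegral.integral_of_le hab]
  exact sq_integral_mul_le_integral_sq_mul_integral_sq
    ((hf.pow 2).intervalIntegrable_of_Icc hab).1 ((hg.pow 2).intervalIntegrable_of_Icc hab).1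
    ((hf.mul hg).intervalIntegrable_of_Icc hab).1

theorem sq_intervalIntegral_le_of_continuousOn (hab : a ≤ b) (hf : ContinuousOn f (Icc a b)) :
    (∫ x in a..b, f x) ^ 2 ≤ (b - a) * ∫ x in a..b, f x ^ 2 := by
  simpa using sq_intervalIntegral_mul_le_of_continuousOn (f := fun _ ↦ 1) hab continuousOn_const hf

theorem sq_intervalIntegral_sub_mul_le_of_continuousOn (hab : a ≤ b)
    (hf : ContinuousOn f (Icc a b)) :
    (∫ r in a..b, (b - r) * f r) ^ 2 ≤ (b - a) ^ 3 / 3 * ∫ r in a..b, f r ^ 2 := by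
  have kernel_sq : ∫ r in a..b, (b - r) ^ 2 = (b - a) ^ 3 / 3 := by
    rw [intervalIntegral.integral_comp_sub_left (fun r ↦ r ^ 2) b, integral_pow]
    norm_num
  rw [← kernel_sq]
  exact sq_intervalIntegral_mul_le_of_continuousOn hab (by fun_prop) hf

theorem intervalIntegral_le_of_mem_Icc (hf : IntervalIntegrable f volume a b)
    (hf_nonneg : ∀ r ∈ Icc a b, 0 ≤ f r) (hx : x ∈ Icc a b) :
    ∫ r in a..x, f r ≤ ∫ r in a..b, f r :=
  intervalIntegral.integral_mono_interval le_rfl hx.1 hx.2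
    (ae_restrict_of_forall_mem measurableSet_Ioc fun r hr ↦ hf_nonneg r (Ioc_subset_Icc_self hr)) hf

theorem hasDerivWithinAt_intervalIntegral_Icc (hf : ContinuousOn f (Icc a b)) (hx : x ∈ Icc a b) :
    HasDerivWithinAt (fun y ↦ ∫ r in a..y, f r) (f x) (Icc a b) x := by
  have : Fact (x ∈ Icc a b) := ⟨hx⟩
  exact intervalIntegral.integral_hasDerivWithinAt_right
    ((hf.mono (Icc_subset_Icc_right hx.2)).intervalIntegrable_of_Icc hx.1)
    (hf.stronglyMeasurableAtFilter_nhdsWithin measurableSet_Icc x) (hf x hx)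

theorem hasDerivWithinAt_intervalIntegral_sub_mul_Icc (hf : ContinuousOn f (Icc a b))
    (hx : x ∈ Icc a b) :
    HasDerivWithinAt (fun y ↦ ∫ r in a..y, (y - r) * f r) (∫ r in a..x, f r) (Icc a b) x := by
  have hmul : ContinuousOn (fun r ↦ r * f r) (Icc a b) := continuousOn_id.mul hf
  have split_kernel (y : ℝ) (hy : y ∈ Icc a b) :
      ∫ r in a..y, (y - r) * f r = y * (∫ r in a..y, f r) - ∫ r in a..y, r * f r := by
    have hsub : Icc a y ⊆ Icc a b := Icc_subset_Icc_right hy.2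
    simp only [sub_mul]
    rw [intervalIntegral.integral_sub
      (((hf.mono hsub).intervalIntegrable_of_Icc hy.1).const_mul y)
      ((hmul.mono hsub).intervalIntegrable_of_Icc hy.1), intervalIntegral.integral_const_mul]
  have hderiv := ((hasDerivWithinAt_id x (Icc a b)).mul
    (hasDerivWithinAt_intervalIntegral_Icc hf hx)).sub
    (hasDerivWithinAt_intervalIntegral_Icc hmul hx)
  exact (hderiv.congr split_kernel (split_kernel x hx)).congr_deriv (by simp)

theorem intervalIntegral_le_exp_mul_of_le_add_intervalIntegral {c : ℝ} (hab : a ≤ b) (hc : 0 ≤ c)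
    (hf : ContinuousOn f (Icc a b)) (hg : ContinuousOn g (Icc a b))
    (hg_nonneg : ∀ x ∈ Icc a b, 0 ≤ g x)
    (hfg : ∀ x ∈ Icc a b, f x ≤ g x + c * ∫ r in a..x, f r) :
    ∫ r in a..b, f r ≤ exp (c * (b - a)) * ∫ r in a..b, g r := by
  have integral_sub (x : ℝ) (hx : x ∈ Icc a b) :
      ∫ r in a..x, (f r - g r) = (∫ r in a..x, f r) - ∫ r in a..x, g r :=
    intervalIntegral.integral_sub
      ((hf.mono (Icc_subset_Icc_right hx.2)).intervalIntegrable_of_Icc hx.1)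
      ((hg.mono (Icc_subset_Icc_right hx.2)).intervalIntegrable_of_Icc hx.1)
  -- The comparison function `φ = ∫ₐˣ f + ∫ₓᵇ g` satisfies the homogeneous inequality `φ' ≤ c φ`.
  let φ (x : ℝ) : ℝ := (∫ r in a..x, (f r - g r)) + ∫ r in a..b, g r
  have hφ (x : ℝ) (hx : x ∈ Icc a b) : HasDerivWithinAt φ (f x - g x) (Icc a b) x :=
    (hasDerivWithinAt_intervalIntegral_Icc (hf.sub hg) hx).add_const _
  have hφ_bound (x : ℝ) (hx : x ∈ Ico a b) : f x - g x ≤ c * φ x + 0 := by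
    have hx' := Ico_subset_Icc_self hx
    have hle : ∫ r in a..x, f r ≤ φ x := by
      simp only [φ, integral_sub x hx']
      linarith [intervalIntegral_le_of_mem_Icc (hg.intervalIntegrable_of_Icc hab) hg_nonneg hx']
    linarith [hfg x hx', mul_le_mul_of_nonneg_left hle hc]
  have hφ_le := le_gronwallBound_of_liminf_deriv_right_le
    (fun x hx ↦ (hφ x hx).continuousWithinAt)
    (fun x hx _ ↦ ((hφ x (Ico_subset_Icc_self hx)).mono_of_mem_nhdsWithin
      (Icc_mem_nhdsGE_of_mem hx)).liminf_right_slope_le)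
    le_rfl hφ_bound b (right_mem_Icc.2 hab)
  simpa [φ, gronwallBound_ε0, integral_sub b (right_mem_Icc.2 hab), mul_comm] using hφ_le

theorem intervalIntegral_const_mul_add_const (hf : IntervalIntegrable f volume a b) (p q : ℝ) :
    ∫ x in a..b, (p * f x + q) = p * (∫ x in a..b, f x) + (b - a) * q := by
  rw [intervalIntegral.integral_add (hf.const_mul p) intervalIntegrable_const,
    intervalIntegral.integral_const_mul, intervalIntegral.integral_const, smul_eq_mul]

theorem intervalIntegral_sq_le_of_sub_sq_le {R : ℝ} (hab : a ≤ b)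
    (hf : IntervalIntegrable (fun x ↦ f x ^ 2) volume a b)
    (hg : IntervalIntegrable (fun x ↦ g x ^ 2) volume a b)
    (hfg : ∀ x ∈ Ioo a b, (f x - g x) ^ 2 ≤ R) :
    ∫ x in a..b, f x ^ 2 ≤ 2 * (∫ x in a..b, g x ^ 2) + 2 * (b - a) * R := by
  calc
    ∫ x in a..b, f x ^ 2 ≤ ∫ x in a..b, (2 * g x ^ 2 + 2 * R) := by
      refine intervalIntegral.integral_mono_on_of_le_Ioo hab hf
        ((hg.const_mul 2).add intervalIntegrable_const) fun x hx ↦ ?_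
      have := add_sq_le (a := g x) (b := f x - g x)
      rw [add_sub_cancel] at this
      linarith [hfg x hx]
    _ = _ := by
      rw [intervalIntegral_const_mul_add_const hg]
      ring

theorem intervalIntegrable_deriv_sq_of_contDiffOn (hab : a < b)
    (hf : ContDiffOn ℝ 1 f (Icc a b)) :
    IntervalIntegrable (fun x ↦ deriv f x ^ 2) volume a b := by
  have hcont := hf.continuousOn_derivWithin (uniqueDiffOn_Icc hab) le_rfl
  refine ((hcont.pow 2).intervalIntegrable_of_Icc hab.le).congr_uIoo fun x hx ↦ ?_
  rw [uIoo_of_le hab.le] at hx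
  simp only [Pi.pow_apply, derivWithin_of_mem_nhds (Icc_mem_nhds hx.1 hx.2)]

end Integral

section Energy

/-- The squared norm `ϑ² + ‖u‖²` of the state `(ϑ, u)` in `ℝ × L²(0, D)`. -/
noncomputable def l2Energy (D ϑ : ℝ) (u : ℝ → ℝ) : ℝ :=
  ϑ ^ 2 + ∫ x in (0 : ℝ)..D, u x ^ 2

/-- The functional `Ψ`, an H¹-type energy of the state `(ϑ, u)`. The two-sided derivative `deriv u`
agrees with the derivative of `u` on `[0, D]` except possibly at the endpoints, a null set. -/
noncomputable def h1Energy (D ϑ : ℝ) (u : ℝ → ℝ) : ℝ :=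
  l2Energy D ϑ u + (∫ x in (0 : ℝ)..D, deriv u x ^ 2) + u D ^ 2

/-- The functional `Υ`, a weighted H¹-type energy of the state `(ϑ, w)`. -/
noncomputable def lyapunovFunctional (a b d D ϑ : ℝ) (w : ℝ → ℝ) : ℝ :=
  ϑ ^ 2 / 2 + a / 2 * (∫ x in (0 : ℝ)..D, w x ^ 2)
    + b / 2 * (∫ x in (0 : ℝ)..D, deriv w x ^ 2) + d / 2 * w D ^ 2

variable {D : ℝ} (ϑ : ℝ)

theorem intervalIntegral_sq_nonneg (hD : 0 ≤ D) (u : ℝ → ℝ) : 0 ≤ ∫ x in (0 : ℝ)..D, u x ^ 2 :=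
  intervalIntegral.integral_nonneg hD fun _ _ ↦ sq_nonneg _

theorem l2Energy_le_of_mem_Icc {u : ℝ → ℝ} {x : ℝ} (hu : ContinuousOn u (Icc 0 D))
    (hx : x ∈ Icc 0 D) : l2Energy x ϑ u ≤ l2Energy D ϑ u := by
  unfold l2Energy
  gcongr
  exact intervalIntegral_le_of_mem_Icc
    ((hu.pow 2).intervalIntegrable_of_Icc (hx.1.trans hx.2)) (fun _ _ ↦ sq_nonneg _) hx

theorem l2Energy_le_h1Energy (hD : 0 ≤ D) (u : ℝ → ℝ) : l2Energy D ϑ u ≤ h1Energy D ϑ u := by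
  unfold h1Energy
  linarith [intervalIntegral_sq_nonneg hD (deriv u), sq_nonneg (u D)]

theorem h1Energy_le_of_sub_sq_le {f g : ℝ → ℝ} {R : ℝ} (hD : 0 < D)
    (hf : ContDiffOn ℝ 1 f (Icc 0 D)) (hg : ContDiffOn ℝ 1 g (Icc 0 D))
    (hfg : ∀ x ∈ Icc 0 D, (f x - g x) ^ 2 ≤ R)
    (hfg' : ∀ x ∈ Ioo 0 D, (deriv f x - deriv g x) ^ 2 ≤ R) :
    h1Energy D ϑ f ≤ 2 * h1Energy D ϑ g + (4 * D + 2) * R := by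
  have values := intervalIntegral_sq_le_of_sub_sq_le hD.le
    ((hf.continuousOn.pow 2).intervalIntegrable_of_Icc hD.le)
    ((hg.continuousOn.pow 2).intervalIntegrable_of_Icc hD.le)
    fun x hx ↦ hfg x (Ioo_subset_Icc_self hx)
  have derivatives := intervalIntegral_sq_le_of_sub_sq_le hD.le
    (intervalIntegrable_deriv_sq_of_contDiffOn hD hf)
    (intervalIntegrable_deriv_sq_of_contDiffOn hD hg) hfg'
  have boundary := add_sq_le (a := g D) (b := f D - g D)
  rw [add_sub_cancel] at boundary
  unfold h1Energy l2Energy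
  linarith [hfg D (right_mem_Icc.2 hD.le), sq_nonneg ϑ]

theorem min_weight_mul_h1Energy_le_lyapunovFunctional (a b d : ℝ) (hD : 0 ≤ D) (w : ℝ → ℝ) :
    min (min 1 a) (min b d) / 2 * h1Energy D ϑ w ≤ lyapunovFunctional a b d D ϑ w := by
  set m := min (min 1 a) (min b d)
  have hm : m ≤ 1 ∧ m ≤ a ∧ m ≤ b ∧ m ≤ d := by simp [m]
  unfold h1Energy l2Energy lyapunovFunctional
  linarith [mul_le_mul_of_nonneg_right hm.1 (sq_nonneg ϑ),
    mul_le_mul_of_nonneg_right hm.2.1 (intervalIntegral_sq_nonneg hD w),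
    mul_le_mul_of_nonneg_right hm.2.2.1 (intervalIntegral_sq_nonneg hD (deriv w)),
    mul_le_mul_of_nonneg_right hm.2.2.2 (sq_nonneg (w D))]

theorem lyapunovFunctional_le_max_weight_mul_h1Energy (a b d : ℝ) (hD : 0 ≤ D) (w : ℝ → ℝ) :
    lyapunovFunctional a b d D ϑ w ≤ max (max 1 a) (max b d) / 2 * h1Energy D ϑ w := by
  set m := max (max 1 a) (max b d)
  have hm : 1 ≤ m ∧ a ≤ m ∧ b ≤ m ∧ d ≤ m := by simp [m]
  unfold h1Energy l2Energy lyapunovFunctional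
  linarith [mul_le_mul_of_nonneg_right hm.1 (sq_nonneg ϑ),
    mul_le_mul_of_nonneg_right hm.2.1 (intervalIntegral_sq_nonneg hD w),
    mul_le_mul_of_nonneg_right hm.2.2.1 (intervalIntegral_sq_nonneg hD (deriv w)),
    mul_le_mul_of_nonneg_right hm.2.2.2 (sq_nonneg (w D))]

end Energy

section Backstepping

/-- The backstepping transform `w` of the state `(ϑ, u)`, with gain kernels `q(x, r) = K (x - r)`
and `γ(x) = K`. -/
noncomputable def backstepping (K ϑ : ℝ) (u : ℝ → ℝ) (x : ℝ) : ℝ :=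
  u x - K * (∫ r in (0 : ℝ)..x, (x - r) * u r) - K * ϑ

/-- A constant `c` for which `(w - u)²` and `(w' - u')²` are at most `c (ϑ² + ‖u‖²)` on `[0, D]`,
where `w` is the backstepping transform of `(ϑ, u)`. -/
noncomputable def backsteppingGain (D K : ℝ) : ℝ :=
  2 * K ^ 2 * (1 + D + D ^ 3)

/-- A constant `C` for which `ϑ² + ‖u‖² ≤ C (ϑ² + ‖w‖²)`, where `w` is the backstepping transform of
`(ϑ, u)`. The exponential is the Grönwall factor. -/
noncomputable def inverseBacksteppingGain (D K : ℝ) : ℝ :=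
  exp (2 * backsteppingGain D K * D) * (2 + 2 * backsteppingGain D K * D)

variable {D : ℝ} (K ϑ : ℝ) {u : ℝ → ℝ} {x : ℝ}

theorem backsteppingGain_nonneg (hD : 0 ≤ D) : 0 ≤ backsteppingGain D K := by
  unfold backsteppingGain
  positivity

theorem inverseBacksteppingGain_nonneg (hD : 0 ≤ D) : 0 ≤ inverseBacksteppingGain D K := by
  have := backsteppingGain_nonneg K hD
  unfold inverseBacksteppingGain
  positivity

theorem hasDerivWithinAt_backstepping (hu : ContDiffOn ℝ 1 u (Icc 0 D)) (hx : x ∈ Icc 0 D) :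
    HasDerivWithinAt (backstepping K ϑ u)
      (derivWithin u (Icc 0 D) x - K * ∫ r in (0 : ℝ)..x, u r) (Icc 0 D) x :=
  ((hu.differentiableOn one_ne_zero x hx).hasDerivWithinAt.sub
    ((hasDerivWithinAt_intervalIntegral_sub_mul_Icc hu.continuousOn hx).const_mul K)).sub_const _

theorem contDiffOn_backstepping (hD : 0 < D) (hu : ContDiffOn ℝ 1 u (Icc 0 D)) :
    ContDiffOn ℝ 1 (backstepping K ϑ u) (Icc 0 D) := by
  have hunique := uniqueDiffOn_Icc hD
  have hderiv (x : ℝ) (hx : x ∈ Icc 0 D) := hasDerivWithinAt_backstepping K ϑ hu hx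
  have hprimitive : ContinuousOn (fun x ↦ ∫ r in (0 : ℝ)..x, u r) (Icc 0 D) := fun x hx ↦
    (hasDerivWithinAt_intervalIntegral_Icc hu.continuousOn hx).continuousWithinAt
  rw [contDiffOn_one_iff_derivWithin hunique]
  refine ⟨fun x hx ↦ (hderiv x hx).differentiableWithinAt, ?_⟩
  exact ((hu.continuousOn_derivWithin hunique le_rfl).sub (hprimitive.const_mul K)).congr
    fun x hx ↦ (hderiv x hx).derivWithin (hunique x hx)

theorem deriv_backstepping (hu : ContDiffOn ℝ 1 u (Icc 0 D)) (hx : x ∈ Ioo 0 D) :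
    deriv (backstepping K ϑ u) x = deriv u x - K * ∫ r in (0 : ℝ)..x, u r := by
  have hnhds := Icc_mem_nhds hx.1 hx.2
  rw [((hasDerivWithinAt_backstepping K ϑ hu (Ioo_subset_Icc_self hx)).hasDerivAt hnhds).deriv,
    derivWithin_of_mem_nhds hnhds]

theorem backstepping_sub_sq_le_l2Energy_upto (hu : ContinuousOn u (Icc 0 D)) (hx : x ∈ Icc 0 D) :
    (backstepping K ϑ u x - u x) ^ 2 ≤ backsteppingGain D K * l2Energy x ϑ u := by
  have hnonneg := intervalIntegral_sq_nonneg hx.1 u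
  have hcube : x ^ 3 ≤ D ^ 3 := pow_le_pow_left₀ hx.1 hx.2 3
  have hD : 0 ≤ D := hx.1.trans hx.2
  have hvolterra : (∫ r in (0 : ℝ)..x, (x - r) * u r) ^ 2
      ≤ x ^ 3 / 3 * ∫ r in (0 : ℝ)..x, u r ^ 2 := by
    simpa using sq_intervalIntegral_sub_mul_le_of_continuousOn hx.1
      (hu.mono (Icc_subset_Icc_right hx.2))
  calc
    (backstepping K ϑ u x - u x) ^ 2 = K ^ 2 * ((∫ r in (0 : ℝ)..x, (x - r) * u r) + ϑ) ^ 2 := by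
      unfold backstepping
      ring
    _ ≤ K ^ 2 * (2 * ((∫ r in (0 : ℝ)..x, (x - r) * u r) ^ 2 + ϑ ^ 2)) := by
      gcongr
      exact add_sq_le
    _ ≤ K ^ 2 * (2 * ((1 + D + D ^ 3) * (∫ r in (0 : ℝ)..x, u r ^ 2)
        + (1 + D + D ^ 3) * ϑ ^ 2)) := by
      gcongr
      · refine hvolterra.trans (mul_le_mul_of_nonneg_right ?_ hnonneg)
        linarith [pow_nonneg hD 3]
      · exact le_mul_of_one_le_left (sq_nonneg ϑ) (by linarith [pow_nonneg hD 3])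
    _ = _ := by
      unfold backsteppingGain l2Energy
      ring

theorem deriv_backstepping_sub_sq_le_l2Energy_upto (hu : ContDiffOn ℝ 1 u (Icc 0 D))
    (hx : x ∈ Ioo 0 D) :
    (deriv (backstepping K ϑ u) x - deriv u x) ^ 2 ≤ backsteppingGain D K * l2Energy x ϑ u := by
  have hnonneg := intervalIntegral_sq_nonneg hx.1.le u
  have hD : 0 < D := hx.1.trans hx.2
  have hprimitive : (∫ r in (0 : ℝ)..x, u r) ^ 2 ≤ x * ∫ r in (0 : ℝ)..x, u r ^ 2 := by
    simpa using sq_intervalIntegral_le_of_continuousOn hx.1.le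
      (hu.continuousOn.mono (Icc_subset_Icc_right hx.2.le))
  calc
    (deriv (backstepping K ϑ u) x - deriv u x) ^ 2 = K ^ 2 * (∫ r in (0 : ℝ)..x, u r) ^ 2 := by
      rw [deriv_backstepping K ϑ hu hx]
      ring
    _ ≤ K ^ 2 * (2 * (1 + D + D ^ 3) * (ϑ ^ 2 + ∫ r in (0 : ℝ)..x, u r ^ 2)) := by
      gcongr
      refine hprimitive.trans (mul_le_mul ?_ (by linarith [sq_nonneg ϑ]) hnonneg (by positivity))
      linarith [pow_pos hD 3, hx.2]
    _ = _ := by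
      unfold backsteppingGain l2Energy
      ring

theorem backstepping_sub_sq_le_l2Energy (hu : ContinuousOn u (Icc 0 D)) (hx : x ∈ Icc 0 D) :
    (backstepping K ϑ u x - u x) ^ 2 ≤ backsteppingGain D K * l2Energy D ϑ u :=
  (backstepping_sub_sq_le_l2Energy_upto K ϑ hu hx).trans (mul_le_mul_of_nonneg_left
    (l2Energy_le_of_mem_Icc ϑ hu hx) (backsteppingGain_nonneg K (hx.1.trans hx.2)))

theorem deriv_backstepping_sub_sq_le_l2Energy (hu : ContDiffOn ℝ 1 u (Icc 0 D))
    (hx : x ∈ Ioo 0 D) :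
    (deriv (backstepping K ϑ u) x - deriv u x) ^ 2 ≤ backsteppingGain D K * l2Energy D ϑ u :=
  (deriv_backstepping_sub_sq_le_l2Energy_upto K ϑ hu hx).trans (mul_le_mul_of_nonneg_left
    (l2Energy_le_of_mem_Icc ϑ hu.continuousOn (Ioo_subset_Icc_self hx))
    (backsteppingGain_nonneg K (hx.1.trans hx.2).le))

theorem intervalIntegral_sq_le_exp_mul_backstepping (hD : 0 < D)
    (hu : ContDiffOn ℝ 1 u (Icc 0 D)) :
    ∫ x in (0 : ℝ)..D, u x ^ 2 ≤ exp (2 * backsteppingGain D K * D)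
      * (2 * (∫ x in (0 : ℝ)..D, backstepping K ϑ u x ^ 2)
        + D * (2 * backsteppingGain D K * ϑ ^ 2)) := by
  set c := backsteppingGain D K
  set w := backstepping K ϑ u
  have hc : 0 ≤ c := backsteppingGain_nonneg K hD.le
  have hw : ContinuousOn (fun x ↦ w x ^ 2) (Icc 0 D) :=
    (contDiffOn_backstepping K ϑ hD hu).continuousOn.pow 2
  have hpointwise (x : ℝ) (hx : x ∈ Icc 0 D) :
      u x ^ 2 ≤ (2 * w x ^ 2 + 2 * c * ϑ ^ 2) + 2 * c * ∫ r in (0 : ℝ)..x, u r ^ 2 := by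
    have hsplit := add_sq_le (a := w x) (b := u x - w x)
    rw [add_sub_cancel, sub_sq_comm] at hsplit
    have hclose := backstepping_sub_sq_le_l2Energy_upto K ϑ hu.continuousOn hx
    rw [l2Energy] at hclose
    linarith
  have hgronwall := intervalIntegral_le_exp_mul_of_le_add_intervalIntegral hD.le
    (mul_nonneg zero_le_two hc) (hu.continuousOn.fun_pow 2)
    ((hw.const_mul 2).fun_add continuousOn_const) (fun x _ ↦ by positivity) hpointwise
  rwa [intervalIntegral_const_mul_add_const (hw.intervalIntegrable_of_Icc hD.le), sub_zero]
    at hgronwall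

theorem l2Energy_le_mul_l2Energy_backstepping (hD : 0 < D) (hu : ContDiffOn ℝ 1 u (Icc 0 D)) :
    l2Energy D ϑ u ≤ inverseBacksteppingGain D K * l2Energy D ϑ (backstepping K ϑ u) := by
  have hgronwall := intervalIntegral_sq_le_exp_mul_backstepping K ϑ hD hu
  have hw_nonneg := intervalIntegral_sq_nonneg hD.le (backstepping K ϑ u)
  have hc := backsteppingGain_nonneg K hD.le
  unfold l2Energy inverseBacksteppingGain
  set c := backsteppingGain D K
  set W := ∫ x in (0 : ℝ)..D, backstepping K ϑ u x ^ 2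
  have hexp : 1 ≤ exp (2 * c * D) := one_le_exp (by positivity)
  calc
    ϑ ^ 2 + ∫ x in (0 : ℝ)..D, u x ^ 2
      ≤ exp (2 * c * D) * ϑ ^ 2 + exp (2 * c * D) * (2 * W + D * (2 * c * ϑ ^ 2)) :=
        add_le_add (le_mul_of_one_le_left (sq_nonneg ϑ) hexp) hgronwall
    _ = exp (2 * c * D) * ((1 + 2 * c * D) * ϑ ^ 2 + 2 * W) := by ring
    _ ≤ exp (2 * c * D) * ((2 + 2 * c * D) * ϑ ^ 2 + (2 + 2 * c * D) * W) := by
      gcongr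
      · norm_num
      · exact le_add_of_nonneg_right (by positivity)
    _ = _ := by ring

theorem h1Energy_backstepping_le_mul_h1Energy (hD : 0 < D) (hu : ContDiffOn ℝ 1 u (Icc 0 D)) :
    h1Energy D ϑ (backstepping K ϑ u)
      ≤ (2 + (4 * D + 2) * backsteppingGain D K) * h1Energy D ϑ u := by
  have hc := backsteppingGain_nonneg K hD.le
  calc
    h1Energy D ϑ (backstepping K ϑ u)
      ≤ 2 * h1Energy D ϑ u + (4 * D + 2) * (backsteppingGain D K * l2Energy D ϑ u) :=
        h1Energy_le_of_sub_sq_le ϑ hD (contDiffOn_backstepping K ϑ hD hu) hu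
          (fun x hx ↦ backstepping_sub_sq_le_l2Energy K ϑ hu.continuousOn hx)
          (fun x hx ↦ deriv_backstepping_sub_sq_le_l2Energy K ϑ hu hx)
    _ ≤ 2 * h1Energy D ϑ u + (4 * D + 2) * (backsteppingGain D K * h1Energy D ϑ u) := by
      gcongr
      exact l2Energy_le_h1Energy ϑ hD.le u
    _ = _ := by ring

theorem h1Energy_le_mul_h1Energy_backstepping (hD : 0 < D) (hu : ContDiffOn ℝ 1 u (Icc 0 D)) :
    h1Energy D ϑ u
      ≤ (2 + (4 * D + 2) * (backsteppingGain D K * inverseBacksteppingGain D K))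
        * h1Energy D ϑ (backstepping K ϑ u) := by
  set w := backstepping K ϑ u
  have hc := backsteppingGain_nonneg K hD.le
  have hc' := inverseBacksteppingGain_nonneg K hD.le
  calc
    h1Energy D ϑ u
      ≤ 2 * h1Energy D ϑ w + (4 * D + 2) * (backsteppingGain D K * l2Energy D ϑ u) := by
        refine h1Energy_le_of_sub_sq_le ϑ hD hu (contDiffOn_backstepping K ϑ hD hu)
          (fun x hx ↦ ?_) (fun x hx ↦ ?_)
        · rw [sub_sq_comm]
          exact backstepping_sub_sq_le_l2Energy K ϑ hu.continuousOn hx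
        · rw [sub_sq_comm]
          exact deriv_backstepping_sub_sq_le_l2Energy K ϑ hu hx
    _ ≤ 2 * h1Energy D ϑ w + (4 * D + 2)
        * (backsteppingGain D K * (inverseBacksteppingGain D K * h1Energy D ϑ w)) := by
      gcongr
      exact (l2Energy_le_mul_l2Energy_backstepping K ϑ hD hu).trans
        (mul_le_mul_of_nonneg_left (l2Energy_le_h1Energy ϑ hD.le w) hc')
    _ = _ := by ring

end Backstepping

/-- Equivalence of the Lyapunov functional `Υ` in the backstepping-transformed
variables with the H¹-type functional `Ψ` in the original variables. -/
theorem lyapunov_functional_equivalence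
    (D Kbar a b d : ℝ) (hD : 0 < D) (ha : 0 < a) (hb : 0 < b) (hd : 0 < d) :
    ∃ ρ > (0:ℝ), ∃ ρbar > (0:ℝ),
      ∀ (ϑ : ℝ) (u : ℝ → ℝ), ContDiffOn ℝ 1 u (Icc 0 D) →
        ∀ w : ℝ → ℝ,
          (∀ x, w x = u x - Kbar * (∫ r in (0:ℝ)..x, (x - r) * u r) - Kbar * ϑ) →
          ρ * (ϑ ^ 2 + (∫ x in (0:ℝ)..D, (u x) ^ 2)
                + (∫ x in (0:ℝ)..D, (deriv u x) ^ 2) + (u D) ^ 2)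
              ≤ ϑ ^ 2 / 2 + a / 2 * (∫ x in (0:ℝ)..D, (w x) ^ 2)
                + b / 2 * (∫ x in (0:ℝ)..D, (deriv w x) ^ 2) + d / 2 * (w D) ^ 2
          ∧ ϑ ^ 2 / 2 + a / 2 * (∫ x in (0:ℝ)..D, (w x) ^ 2)
                + b / 2 * (∫ x in (0:ℝ)..D, (deriv w x) ^ 2) + d / 2 * (w D) ^ 2
              ≤ ρbar * (ϑ ^ 2 + (∫ x in (0:ℝ)..D, (u x) ^ 2)
                + (∫ x in (0:ℝ)..D, (deriv u x) ^ 2) + (u D) ^ 2) := by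
  have hc := backsteppingGain_nonneg Kbar hD.le
  have hc' := inverseBacksteppingGain_nonneg Kbar hD.le
  let C := 2 + (4 * D + 2) * backsteppingGain D Kbar
  let C' := 2 + (4 * D + 2) * (backsteppingGain D Kbar * inverseBacksteppingGain D Kbar)
  let m := min (min 1 a) (min b d) / 2
  let M := max (max 1 a) (max b d) / 2
  have hC' : 0 < C' := by positivity
  have hm : 0 < m := by positivity
  have hM : 0 < M := by positivity
  refine ⟨m / C', div_pos hm hC', M * C, by positivity, fun ϑ u hu w hw ↦ ?_⟩
  obtain rfl : w = backstepping Kbar ϑ u := funext hw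
  change m / C' * h1Energy D ϑ u ≤ lyapunovFunctional a b d D ϑ _ ∧
    lyapunovFunctional a b d D ϑ _ ≤ M * C * h1Energy D ϑ u
  constructor
  · calc
      m / C' * h1Energy D ϑ u ≤ m / C' * (C' * h1Energy D ϑ (backstepping Kbar ϑ u)) := by
        gcongr
        exact h1Energy_le_mul_h1Energy_backstepping Kbar ϑ hD hu
      _ = m * h1Energy D ϑ (backstepping Kbar ϑ u) := by field
      _ ≤ _ := min_weight_mul_h1Energy_le_lyapunovFunctional ϑ a b d hD.le _
  · rw [mul_assoc]
    exact (lyapunovFunctional_le_max_weight_mul_h1Energy ϑ a b d hD.le _).trans <|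
      mul_le_mul_of_nonneg_left (h1Energy_backstepping_le_mul_h1Energy Kbar ϑ hD hu) hM.le
end

section
/- Let a ≠ 0, ω > 0, and y*, H, ϑ ∈ ℝ. Then (ω/(2π)) ∫₀^{2π/ω} (−8/a²)·cos(2ωt) · ( y* + (H/2)(ϑ + a sin(ωt))² ) dt = H. -/
open Real

/-!
After rescaling the period to `2π`, squaring the probing signal gives the response
`y* + (H/2)(ϑ + a sin x)²` the second harmonic `-(a²H/4) cos 2x`. Demodulating by `cos 2x`
annihilates the constant and the first harmonic by orthogonality and multiplies the coefficient of
the second harmonic by `∫ cos² 2x = π`; the gain `-8/a²` is chosen to undo the resulting factor.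
-/

theorem integral_zero_two_pi_sin_int_mul (n : ℤ) : ∫ x in (0:ℝ)..2 * π, sin (n * x) = 0 := by
  rcases eq_or_ne n 0 with rfl | hn
  · simp
  · have hn' : (n : ℝ) ≠ 0 := Int.cast_ne_zero.mpr hn
    rw [intervalIntegral.integral_comp_mul_left _ hn', integral_sin, cos_int_mul_two_pi]
    simp

theorem integral_zero_two_pi_cos_int_mul {n : ℤ} (hn : n ≠ 0) :
    ∫ x in (0:ℝ)..2 * π, cos (n * x) = 0 := by
  have hn' : (n : ℝ) ≠ 0 := Int.cast_ne_zero.mpr hn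
  have sin_end : sin (n * (2 * π)) = 0 := by simpa using sin_add_int_mul_two_pi 0 n
  rw [intervalIntegral.integral_comp_mul_left _ hn', integral_cos, sin_end]
  simp

theorem integral_zero_two_pi_cos_int_mul_mul_sin_int_mul (n m : ℤ) :
    ∫ x in (0:ℝ)..2 * π, cos (n * x) * sin (m * x) = 0 := by
  have product_to_sum (x : ℝ) : cos (n * x) * sin (m * x) =
      (sin ((m - n : ℤ) * x) + sin ((m + n : ℤ) * x)) / 2 := by
    push_cast
    rw [sub_mul, add_mul, ← two_mul_sin_mul_cos]
    ring
  simp_rw [product_to_sum]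
  rw [intervalIntegral.integral_div,
    intervalIntegral.integral_add (Continuous.intervalIntegrable (by fun_prop) _ _)
      (Continuous.intervalIntegrable (by fun_prop) _ _),
    integral_zero_two_pi_sin_int_mul, integral_zero_two_pi_sin_int_mul, add_zero, zero_div]

theorem integral_zero_two_pi_cos_int_mul_sq {n : ℤ} (hn : n ≠ 0) :
    ∫ x in (0:ℝ)..2 * π, cos (n * x) ^ 2 = π := by
  have half_angle (x : ℝ) : cos (n * x) ^ 2 = (1 + cos ((2 * n : ℤ) * x)) / 2 := by
    push_cast
    rw [cos_sq, mul_assoc]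
    ring
  simp_rw [half_angle]
  rw [intervalIntegral.integral_div,
    intervalIntegral.integral_add (Continuous.intervalIntegrable (by fun_prop) _ _)
      (Continuous.intervalIntegrable (by fun_prop) _ _),
    integral_one, integral_zero_two_pi_cos_int_mul (mul_ne_zero two_ne_zero hn)]
  ring

theorem integral_zero_two_pi_cos_int_mul_mul_harmonics {n : ℤ} (hn : n ≠ 0) (m : ℤ) (A B C : ℝ) :
    ∫ x in (0:ℝ)..2 * π, cos (n * x) * (A + B * sin (m * x) + C * cos (n * x)) = π * C := by
  have expand (x : ℝ) : cos (n * x) * (A + B * sin (m * x) + C * cos (n * x)) =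
      A * cos (n * x) + B * (cos (n * x) * sin (m * x)) + C * cos (n * x) ^ 2 := by
    ring
  simp_rw [expand]
  rw [intervalIntegral.integral_add (Continuous.intervalIntegrable (by fun_prop) _ _)
      (Continuous.intervalIntegrable (by fun_prop) _ _),
    intervalIntegral.integral_add (Continuous.intervalIntegrable (by fun_prop) _ _)
      (Continuous.intervalIntegrable (by fun_prop) _ _)]
  simp only [intervalIntegral.integral_const_mul, integral_zero_two_pi_cos_int_mul hn,
    integral_zero_two_pi_cos_int_mul_mul_sin_int_mul, integral_zero_two_pi_cos_int_mul_sq hn]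
  ring

theorem average_comp_mul_left {E : Type*} [NormedAddCommGroup E] [NormedSpace ℝ E]
    {ω : ℝ} (hω : ω ≠ 0) (T : ℝ) (f : ℝ → E) :
    (ω / T) • ∫ t in (0:ℝ)..T / ω, f (ω * t) = T⁻¹ • ∫ x in (0:ℝ)..T, f x := by
  rw [div_eq_inv_mul, mul_smul, intervalIntegral.smul_integral_comp_mul_left, mul_zero,
    mul_div_cancel₀ T hω]

theorem add_mul_sin_sq_eq_harmonics (ϑ a x : ℝ) :
    (ϑ + a * sin x) ^ 2 =
      (ϑ ^ 2 + a ^ 2 / 2) + 2 * ϑ * a * sin x + -(a ^ 2 / 2) * cos (2 * x) := by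
  rw [cos_two_mul, cos_sq']
  ring

theorem integral_zero_two_pi_cos_two_mul_mul_quadratic_sin (a y H ϑ : ℝ) :
    ∫ x in (0:ℝ)..2 * π, cos (2 * x) * (y + H / 2 * (ϑ + a * sin x) ^ 2) =
      -(π * a ^ 2 * H / 4) := by
  have harmonics (x : ℝ) : y + H / 2 * (ϑ + a * sin x) ^ 2 =
      (y + H / 2 * (ϑ ^ 2 + a ^ 2 / 2)) + H * ϑ * a * sin ((1 : ℤ) * x)
        + -(a ^ 2 * H / 4) * cos ((2 : ℤ) * x) := by
    rw [add_mul_sin_sq_eq_harmonics]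
    push_cast
    ring_nf
  calc ∫ x in (0:ℝ)..2 * π, cos (2 * x) * (y + H / 2 * (ϑ + a * sin x) ^ 2)
    _ = π * -(a ^ 2 * H / 4) := by
      simp_rw [harmonics]
      exact_mod_cast integral_zero_two_pi_cos_int_mul_mul_harmonics two_ne_zero 1 _ _ _
    _ = -(π * a ^ 2 * H / 4) := by ring

/-- Average of the Hessian estimate `Ĥ(t) = −(8/a²) cos(2ωt) · y(t)` over one
period recovers the Hessian `H`. -/
theorem hessian_estimate_average
    (a ω ystar H ϑ : ℝ) (ha : a ≠ 0) (hω : 0 < ω) :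
    (ω / (2 * π)) * ∫ t in (0:ℝ)..(2 * π / ω),
        (-8 / a ^ 2) * Real.cos (2 * ω * t)
          * (ystar + H / 2 * (ϑ + a * Real.sin (ω * t)) ^ 2)
      = H := by
  simp only [mul_assoc _ ω, mul_assoc (-8 / a ^ 2)]
  calc (ω / (2 * π)) * ∫ t in (0:ℝ)..(2 * π / ω),
        (-8 / a ^ 2) * (cos (2 * (ω * t)) * (ystar + H / 2 * (ϑ + a * sin (ω * t)) ^ 2))
    _ = (2 * π)⁻¹ * ∫ x in (0:ℝ)..2 * π,
        (-8 / a ^ 2) * (cos (2 * x) * (ystar + H / 2 * (ϑ + a * sin x) ^ 2)) :=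
      average_comp_mul_left hω.ne' (2 * π)
        fun x => (-8 / a ^ 2) * (cos (2 * x) * (ystar + H / 2 * (ϑ + a * sin x) ^ 2))
    _ = (2 * π)⁻¹ * ((-8 / a ^ 2) * -(π * a ^ 2 * H / 4)) := by
      rw [intervalIntegral.integral_const_mul, integral_zero_two_pi_cos_two_mul_mul_quadratic_sin]
    _ = H := by
      field_simp
      ring
end

section
/- Let a ≠ 0, ω > 0, and y*, H, ϑ, g ∈ ℝ. Then (ω/(2π)) ∫₀^{2π/ω} ( y* + (H/2)(ϑ + a sin(ωt))² ) · ( (2/a) sin(ωt) − (8/a²) cos(2ωt)·g ) dt = H·ϑ + H·g. -/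
open Real

/-!
The quadratic output has only the harmonics `1`, `sin (ω t)` and `cos (2ω t)`, and the
demodulating signal only the last two. By orthogonality, averaging their product picks out half
the sum of the products of matching coefficients: `sin` against `sin` recovers the gradient `H * ϑ`,
and `cos` against `cos` recovers `H`, multiplied by `g`.
-/

lemma integral_sin_int_mul_zero_two_pi (n : ℤ) :
    ∫ x in (0 : ℝ)..2 * π, sin (n * x) = 0 := by
  rcases eq_or_ne n 0 with rfl | hn
  · simp
  · rw [intervalIntegral.integral_comp_mul_left sin (Int.cast_ne_zero.mpr hn), integral_sin,
      mul_zero, cos_zero, cos_int_mul_two_pi, sub_self, smul_zero]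

lemma integral_sin_int_mul_mul_cos_int_mul_zero_two_pi (m n : ℤ) :
    ∫ x in (0 : ℝ)..2 * π, sin (m * x) * cos (n * x) = 0 := by
  have product_to_sum (x : ℝ) : sin (m * x) * cos (n * x) =
      (sin ((m - n : ℤ) * x) + sin ((m + n : ℤ) * x)) / 2 := by
    push_cast
    rw [sub_mul, add_mul, ← two_mul_sin_mul_cos]
    ring
  simp_rw [product_to_sum]
  rw [intervalIntegral.integral_div, intervalIntegral.integral_add
      (Continuous.intervalIntegrable (by fun_prop) _ _)
      (Continuous.intervalIntegrable (by fun_prop) _ _),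
    integral_sin_int_mul_zero_two_pi, integral_sin_int_mul_zero_two_pi, add_zero, zero_div]

section NonzeroFrequency

variable {m n : ℤ}

lemma integral_cos_int_mul_zero_two_pi (hn : n ≠ 0) :
    ∫ x in (0 : ℝ)..2 * π, cos (n * x) = 0 := by
  have sin_endpoint : sin (n * (2 * π)) = 0 := by
    simpa [mul_assoc] using sin_int_mul_pi (n * 2)
  rw [intervalIntegral.integral_comp_mul_left cos (Int.cast_ne_zero.mpr hn), integral_cos,
    mul_zero, sin_zero, sin_endpoint, sub_self, smul_zero]

lemma integral_cos_int_mul_sq_zero_two_pi (hn : n ≠ 0) :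
    ∫ x in (0 : ℝ)..2 * π, cos (n * x) ^ 2 = π := by
  have half_angle (x : ℝ) : cos (n * x) ^ 2 = (1 + cos ((2 * n : ℤ) * x)) / 2 := by
    push_cast
    rw [cos_sq, mul_assoc]
    ring
  simp_rw [half_angle]
  rw [intervalIntegral.integral_div, intervalIntegral.integral_add
      (Continuous.intervalIntegrable (by fun_prop) _ _)
      (Continuous.intervalIntegrable (by fun_prop) _ _),
    integral_cos_int_mul_zero_two_pi (mul_ne_zero two_ne_zero hn),
    intervalIntegral.integral_const, smul_eq_mul]
  ring

lemma integral_sin_int_mul_sq_zero_two_pi (hn : n ≠ 0) :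
    ∫ x in (0 : ℝ)..2 * π, sin (n * x) ^ 2 = π := by
  simp_rw [sin_sq]
  rw [intervalIntegral.integral_sub
      (Continuous.intervalIntegrable (by fun_prop) _ _)
      (Continuous.intervalIntegrable (by fun_prop) _ _),
    integral_cos_int_mul_sq_zero_two_pi hn, intervalIntegral.integral_const, smul_eq_mul]
  ring

lemma integral_harmonics_mul_harmonics_zero_two_pi (hm : m ≠ 0) (hn : n ≠ 0)
    (c₀ c₁ c₂ d₁ d₂ : ℝ) :
    ∫ x in (0 : ℝ)..2 * π,
        (c₀ + c₁ * sin (m * x) + c₂ * cos (n * x)) * (d₁ * sin (m * x) + d₂ * cos (n * x)) =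
      π * (c₁ * d₁ + c₂ * d₂) := by
  have expand (x : ℝ) :
      (c₀ + c₁ * sin (m * x) + c₂ * cos (n * x)) * (d₁ * sin (m * x) + d₂ * cos (n * x)) =
        c₀ * d₁ * sin (m * x) + c₀ * d₂ * cos (n * x) + c₁ * d₁ * sin (m * x) ^ 2 +
          (c₁ * d₂ + c₂ * d₁) * (sin (m * x) * cos (n * x)) + c₂ * d₂ * cos (n * x) ^ 2 := by
    ring
  simp_rw [expand]
  repeat rw [intervalIntegral.integral_add
    (Continuous.intervalIntegrable (by fun_prop) _ _)
    (Continuous.intervalIntegrable (by fun_prop) _ _)]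
  simp only [intervalIntegral.integral_const_mul, integral_sin_int_mul_zero_two_pi,
    integral_cos_int_mul_zero_two_pi hn, integral_sin_int_mul_sq_zero_two_pi hm,
    integral_sin_int_mul_mul_cos_int_mul_zero_two_pi, integral_cos_int_mul_sq_zero_two_pi hn]
  ring

end NonzeroFrequency

lemma period_average_comp_mul_left {ω : ℝ} (hω : ω ≠ 0) (f : ℝ → ℝ) :
    ω / (2 * π) * ∫ t in (0 : ℝ)..2 * π / ω, f (ω * t) =
      (2 * π)⁻¹ * ∫ x in (0 : ℝ)..2 * π, f x := by
  rw [intervalIntegral.integral_comp_mul_left f hω, mul_zero, mul_div_cancel₀ _ hω, smul_eq_mul]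
  field_simp

lemma quadratic_comp_sin_eq_harmonics (ystar H ϑ a x : ℝ) :
    ystar + H / 2 * (ϑ + a * sin x) ^ 2 =
      (ystar + H / 2 * ϑ ^ 2 + H * a ^ 2 / 4) + H * ϑ * a * sin x +
        -(H * a ^ 2 / 4) * cos (2 * x) := by
  rw [cos_two_mul, cos_sq']
  ring

/-- Average over one period of the demodulated control bracket yields
`H·ϑ + H·g`. -/
theorem control_bracket_average
    (a ω ystar H ϑ g : ℝ) (ha : a ≠ 0) (hω : 0 < ω) :
    (ω / (2 * π)) * ∫ t in (0:ℝ)..(2 * π / ω),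
        (ystar + H / 2 * (ϑ + a * Real.sin (ω * t)) ^ 2)
          * ((2 / a) * Real.sin (ω * t) - (8 / a ^ 2) * Real.cos (2 * ω * t) * g)
      = H * ϑ + H * g := by
  have orthogonality := integral_harmonics_mul_harmonics_zero_two_pi one_ne_zero two_ne_zero
    (ystar + H / 2 * ϑ ^ 2 + H * a ^ 2 / 4) (H * ϑ * a) (-(H * a ^ 2 / 4))
    (2 / a) (-(8 / a ^ 2 * g))
  simp only [Int.cast_one, Int.cast_ofNat, one_mul, ← quadratic_comp_sin_eq_harmonics]
    at orthogonality
  have demodulation (t : ℝ) :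
      2 / a * sin (ω * t) - 8 / a ^ 2 * cos (2 * ω * t) * g =
        2 / a * sin (ω * t) + -(8 / a ^ 2 * g) * cos (2 * (ω * t)) := by
    rw [mul_assoc 2 ω t]
    ring
  simp_rw [demodulation]
  rw [period_average_comp_mul_left hω.ne' fun x ↦ (ystar + H / 2 * (ϑ + a * sin x) ^ 2) *
    (2 / a * sin x + -(8 / a ^ 2 * g) * cos (2 * x)), orthogonality]
  field_simp
  ring
end

section
/- Let a ∈ ℝ, ω > 0, D > 0, set r = √(ω/2), and define β : ℝ × ℝ → ℝ by β(x,t) = a·( cosh(rx)·cos(rx)·sin(ωt) + sinh(rx)·sin(rx)·cos(ωt) ). Then β satisfies the heat equation ∂ₜβ(x,t) = ∂ₓₓβ(x,t) for all x, t, with Neumann condition ∂ₓβ(0,t) = 0 and β(0,t) = a·sin(ωt). Moreover, the propagated perturbation signal S(t) := β(D,t) satisfies |S(t)| ≤ 2|a|·e^{D√(ω/2)} for all t. -/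
open Real

/-!
For every `κ : ℂ` the separated function `cosh (κ x) * exp (κ² t)` solves the heat equation and is
even in `x`, so its imaginary part is a real solution with zero flux at `x = 0`. Its trace there
oscillates as `exp (I ω t)` precisely when `κ² = I ω`, that is `κ = ± (1 + I) √(ω/2)`; the growth
factor `exp (D √(ω/2))` comes from `‖cosh (κ D)‖ ≤ cosh (D * re κ)`.
-/

/-- The complex solution of the heat equation with amplitude `c` obtained by separation of
variables, even in `x`; real solutions are its real and imaginary parts. -/
noncomputable def heatMode (c κ : ℂ) (x t : ℝ) : ℂ :=
  c * Complex.cosh (κ * x) * Complex.exp (κ ^ 2 * t)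

/-- The square root of `I ω` with nonnegative real part: the complex wavenumber of a diffusion
wave of angular frequency `ω`. It is meaningful for `0 ≤ ω` only, since `√(ω / 2) = 0` for
negative `ω`. -/
noncomputable def diffusionWavenumber (ω : ℝ) : ℂ :=
  √(ω / 2) * (1 + Complex.I)

theorem norm_cosh_le_cosh_re (z : ℂ) : ‖Complex.cosh z‖ ≤ Real.cosh z.re := by
  calc ‖Complex.cosh z‖ = ‖Complex.exp z + Complex.exp (-z)‖ / 2 := by simp [Complex.cosh]
    _ ≤ (‖Complex.exp z‖ + ‖Complex.exp (-z)‖) / 2 := by gcongr; exact norm_add_le _ _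
    _ = Real.cosh z.re := by simp [Complex.norm_exp, Real.cosh_eq]

theorem cosh_le_exp_of_nonneg {x : ℝ} (hx : 0 ≤ x) : Real.cosh x ≤ Real.exp x := by
  rw [← Real.cosh_add_sinh]
  exact le_add_of_nonneg_right (Real.sinh_nonneg_iff.mpr hx)

theorem hasDerivAt_im_comp {f : ℝ → ℂ} {f' : ℂ} {x : ℝ} (hf : HasDerivAt f f' x) :
    HasDerivAt (fun y => (f y).im) f'.im x :=
  Complex.imCLM.hasFDerivAt.comp_hasDerivAt x hf

section HeatMode

variable (c κ : ℂ) (x t : ℝ)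

theorem hasDerivAt_heatMode_time :
    HasDerivAt (fun τ => heatMode c κ x τ) (κ ^ 2 * heatMode c κ x t) t := by
  simp only [heatMode]
  convert ((hasDerivAt_const_mul (κ ^ 2)).cexp.const_mul
    (c * Complex.cosh (κ * x))).comp_ofReal using 1
  ring

theorem hasDerivAt_heatMode_space :
    HasDerivAt (fun y => heatMode c κ y t)
      (c * κ * Complex.sinh (κ * x) * Complex.exp (κ ^ 2 * t)) x := by
  simp only [heatMode]
  convert (((hasDerivAt_const_mul κ).ccosh.const_mul c).mul_const
    (Complex.exp (κ ^ 2 * t))).comp_ofReal using 1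
  ring

theorem hasDerivAt_heatMode_space_space :
    HasDerivAt (fun y : ℝ => c * κ * Complex.sinh (κ * y) * Complex.exp (κ ^ 2 * t))
      (κ ^ 2 * heatMode c κ x t) x := by
  convert (((hasDerivAt_const_mul κ).csinh.const_mul (c * κ)).mul_const
    (Complex.exp (κ ^ 2 * t))).comp_ofReal using 1
  rw [heatMode]
  ring

theorem deriv_im_heatMode_space :
    deriv (fun y => (heatMode c κ y t).im) =
      fun y : ℝ => (c * κ * Complex.sinh (κ * y) * Complex.exp (κ ^ 2 * t)).im :=
  funext fun y => (hasDerivAt_im_comp (hasDerivAt_heatMode_space c κ y t)).deriv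

theorem deriv_time_im_heatMode_eq_deriv_deriv_space :
    deriv (fun τ => (heatMode c κ x τ).im) t =
      deriv (deriv fun y => (heatMode c κ y t).im) x := by
  rw [deriv_im_heatMode_space, (hasDerivAt_im_comp (hasDerivAt_heatMode_time c κ x t)).deriv,
    (hasDerivAt_im_comp (hasDerivAt_heatMode_space_space c κ x t)).deriv]

theorem deriv_im_heatMode_space_zero : deriv (fun y => (heatMode c κ y t).im) 0 = 0 := by
  simp [deriv_im_heatMode_space]

theorem norm_heatMode_le :
    ‖heatMode c κ x t‖ ≤ ‖c‖ * Real.cosh (κ.re * x) * Real.exp ((κ ^ 2).re * t) := by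
  have norm_cosh_le : ‖Complex.cosh (κ * x)‖ ≤ Real.cosh (κ.re * x) := by
    simpa only [Complex.re_mul_ofReal] using norm_cosh_le_cosh_re (κ * x)
  rw [heatMode, norm_mul, norm_mul, Complex.norm_exp, Complex.re_mul_ofReal]
  gcongr

end HeatMode

theorem diffusionWavenumber_re (ω : ℝ) : (diffusionWavenumber ω).re = √(ω / 2) := by
  simp [diffusionWavenumber]

theorem diffusionWavenumber_sq {ω : ℝ} (hω : 0 ≤ ω) :
    diffusionWavenumber ω ^ 2 = ω * Complex.I := by
  have sqrt_sq : (√(ω / 2) : ℂ) ^ 2 = ω / 2 := by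
    exact_mod_cast Real.sq_sqrt (div_nonneg hω zero_le_two)
  calc diffusionWavenumber ω ^ 2
      = (√(ω / 2) : ℂ) ^ 2 * (1 + 2 * Complex.I + Complex.I ^ 2) := by
        rw [diffusionWavenumber]; ring
    _ = ω * Complex.I := by rw [sqrt_sq, Complex.I_sq]; ring

theorem cosh_diffusionWavenumber_mul (ω x : ℝ) :
    Complex.cosh (diffusionWavenumber ω * x) =
      ↑(Real.cosh (√(ω / 2) * x) * Real.cos (√(ω / 2) * x)) +
        ↑(Real.sinh (√(ω / 2) * x) * Real.sin (√(ω / 2) * x)) * Complex.I := by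
  have split_re_im : diffusionWavenumber ω * x =
      ↑(√(ω / 2) * x) + ↑(√(ω / 2) * x) * Complex.I := by
    rw [diffusionWavenumber]; push_cast; ring
  rw [split_re_im, Complex.cosh_add, Complex.cosh_mul_I, Complex.sinh_mul_I]
  push_cast
  ring

theorem im_heatMode_diffusionWavenumber (a : ℝ) {ω : ℝ} (hω : 0 ≤ ω) (x t : ℝ) :
    (heatMode a (diffusionWavenumber ω) x t).im = a *
      (Real.cosh (√(ω / 2) * x) * Real.cos (√(ω / 2) * x) * Real.sin (ω * t)
        + Real.sinh (√(ω / 2) * x) * Real.sin (√(ω / 2) * x) * Real.cos (ω * t)) := by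
  have time_factor : Complex.exp (diffusionWavenumber ω ^ 2 * t) =
      ↑(Real.cos (ω * t)) + ↑(Real.sin (ω * t)) * Complex.I := by
    rw [← Complex.exp_ofReal_mul_I, diffusionWavenumber_sq hω]
    push_cast
    ring_nf
  rw [heatMode, time_factor, cosh_diffusionWavenumber_mul, mul_assoc, Complex.im_ofReal_mul,
    Complex.mul_im]
  simp only [Complex.add_re, Complex.add_im, Complex.re_ofReal_mul, Complex.im_ofReal_mul,
    Complex.ofReal_re, Complex.ofReal_im, Complex.I_re, Complex.I_im]
  ring

theorem abs_im_heatMode_diffusionWavenumber_le (c : ℂ) {ω x : ℝ} (hω : 0 ≤ ω) (hx : 0 ≤ x)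
    (t : ℝ) :
    |(heatMode c (diffusionWavenumber ω) x t).im| ≤ ‖c‖ * Real.exp (x * √(ω / 2)) := by
  have re_sq_eq_zero : (diffusionWavenumber ω ^ 2).re = 0 := by
    simp [diffusionWavenumber_sq hω]
  calc |(heatMode c (diffusionWavenumber ω) x t).im|
      ≤ ‖heatMode c (diffusionWavenumber ω) x t‖ := Complex.abs_im_le_norm _
    _ ≤ ‖c‖ * Real.cosh (x * √(ω / 2)) := by
        simpa [re_sq_eq_zero, diffusionWavenumber_re, mul_comm x] using
          norm_heatMode_le c (diffusionWavenumber ω) x t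
    _ ≤ ‖c‖ * Real.exp (x * √(ω / 2)) := by
        gcongr
        exact cosh_le_exp_of_nonneg (by positivity)

/-- Trajectory generation for the diffusion PDE: with `r = √(ω/2)`,
`β(x,t) = a(cosh(rx)cos(rx)sin(ωt) + sinh(rx)sin(rx)cos(ωt))` solves the heat
equation with Neumann condition at `x = 0` and trace `a sin(ωt)`, and the
propagated perturbation signal `S(t) = β(D,t)` is bounded by
`2|a|e^{D√(ω/2)}`. -/
theorem diffusion_trajectory_generation
    (a ω D : ℝ) (hω : 0 < ω) (hD : 0 < D) (β : ℝ → ℝ → ℝ)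
    (hβ : ∀ x t, β x t = a *
      (Real.cosh (Real.sqrt (ω / 2) * x) * Real.cos (Real.sqrt (ω / 2) * x)
          * Real.sin (ω * t)
        + Real.sinh (Real.sqrt (ω / 2) * x) * Real.sin (Real.sqrt (ω / 2) * x)
          * Real.cos (ω * t))) :
    (∀ x t : ℝ, deriv (fun τ => β x τ) t = deriv (deriv (fun y => β y t)) x)
    ∧ (∀ t : ℝ, deriv (fun y => β y t) 0 = 0)
    ∧ (∀ t : ℝ, β 0 t = a * Real.sin (ω * t))
    ∧ (∀ t : ℝ, |β D t| ≤ 2 * |a| * Real.exp (D * Real.sqrt (ω / 2))) := by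
  obtain rfl : β = fun x t => (heatMode a (diffusionWavenumber ω) x t).im := by
    funext x t
    rw [hβ, im_heatMode_diffusionWavenumber a hω.le]
  refine ⟨deriv_time_im_heatMode_eq_deriv_deriv_space _ _, deriv_im_heatMode_space_zero _ _,
    fun t => ?trace, fun t => ?bound⟩
  case trace => simpa using hβ 0 t
  case bound =>
    calc |(heatMode a (diffusionWavenumber ω) D t).im|
        ≤ |a| * Real.exp (D * √(ω / 2)) := by
          simpa only [Complex.norm_real, Real.norm_eq_abs] using
            abs_im_heatMode_diffusionWavenumber_le a hω.le hD.le t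
      _ ≤ 2 * |a| * Real.exp (D * √(ω / 2)) := by
          gcongr
          exact le_mul_of_one_le_left (abs_nonneg a) one_le_two
end
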